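/- Suppose, in addition to the standing combinatorial setup, that w_0(m) ≥ −1 and w_0(2m) ≥ −1. Then w_0(ℓ) ≥ −1 for every ℓ ∈ ℕ^r. Conversely, if w_0(ℓ) ≥ −1 for every ℓ ∈ ℕ^r then in particular w_0(m) ≥ −1 and w_0(2m) ≥ −1. (This is the semigroup-theoretic core of the paper's characterization of reduced curve germs of finite Cohen–Macaulay type: the minimum of the weight function is ≥ −1 if and only if the weights of the multiplicity vector m and of 2m are ≥ −1.) -/

import Mathlib

/-!
Since `m` bounds `S ∖ {0}` from below, `h m ≤ 1`; hence `w₀(m) ≥ -1` forces `|m| ≤ 3`, and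
`w₀(2m) ≥ -1` forces `h(2m) - h(m) ≥ |m| - 1`. As `S + m ⊆ S`, the increment
`ℓ ↦ h(ℓ + m) - h(ℓ)` is monotone, so from `m` on the function `h` grows by at least
`max (1, |m| - 1) ≥ |m| / 2` along the multiples of `m`, and `w₀` does not decrease along them.
An arbitrary vector is `k m + v` with `m ≰ v`. If `T` is the least integer with `v ≤ T m`, then
`h(k m + v) ≥ h(k m) + T`, while `|v| ≤ T (|m| - 1) ≤ 2 T`; so `w₀(k m + v) ≥ w₀(k m) ≥ -1`.
-/

section Vectors

variable {ι : Type*} {m v : ι → ℕ}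

theorem single_le_iff [DecidableEq ι] {α : Type*} [AddMonoid α] [Preorder α]
    [CanonicallyOrderedAdd α] {f : ι → α} {i : ι} {x : α} : Pi.single i x ≤ f ↔ x ≤ f i := by
  simp [Pi.single, update_le_iff]

theorem induction_add_single [Finite ι] [DecidableEq ι] {P : (ι → ℕ) → Prop} (zero : P 0)
    (add_single : ∀ v i, P v → P (v + Pi.single i 1)) (v : ι → ℕ) : P v := by
  induction v using WellFoundedLT.induction with
  | ind v ih =>
    by_cases hv : v = 0
    · exact hv ▸ zero
    obtain ⟨i, hi⟩ := Function.ne_iff.mp hv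
    have hle : Pi.single i 1 ≤ v := single_le_iff.mpr (Nat.one_le_iff_ne_zero.mpr hi)
    have hlt : v - Pi.single i 1 < v :=
      Pi.lt_def.mpr ⟨tsub_le_self, i, by simpa using Nat.pos_of_ne_zero hi⟩
    exact tsub_add_cancel_of_le hle ▸ add_single _ i (ih _ hlt)

theorem monotone_of_le_add_single [Finite ι] [DecidableEq ι] {α : Type*} [Preorder α]
    {f : (ι → ℕ) → α} (hf : ∀ ℓ i, f ℓ ≤ f (ℓ + Pi.single i 1)) : Monotone f := by
  intro a b hab
  obtain ⟨c, rfl⟩ := exists_add_of_le hab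
  induction c using induction_add_single with
  | zero => simp
  | add_single v i ih => exact (ih le_self_add).trans (add_assoc a v _ ▸ hf _ i)

theorem exists_eq_nsmul_add_not_le (hm : m ≠ 0) (ℓ : ι → ℕ) :
    ∃ (k : ℕ) (v : ι → ℕ), ℓ = k • m + v ∧ ¬ m ≤ v := by
  classical
  have hex : ∃ k : ℕ, ¬ (k + 1) • m ≤ ℓ := by
    obtain ⟨i, hi⟩ := Function.ne_iff.mp hm
    refine ⟨ℓ i, fun hle => (Nat.lt_succ_self (ℓ i)).not_ge ?_⟩
    exact (Nat.le_mul_of_pos_right _ (Nat.pos_of_ne_zero hi)).trans (hle i)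
  obtain ⟨k, hk, hmin⟩ : ∃ k : ℕ, ¬ (k + 1) • m ≤ ℓ ∧ ∀ j < k, (j + 1) • m ≤ ℓ :=
    ⟨Nat.find hex, Nat.find_spec hex, fun _ hj => not_not.mp (Nat.find_min hex hj)⟩
  have hle : k • m ≤ ℓ := by
    cases k with
    | zero => simp
    | succ j => exact hmin j j.lt_succ_self
  refine ⟨k, ℓ - k • m, (add_tsub_cancel_of_le hle).symm, fun hmv => hk ?_⟩
  calc (k + 1) • m = k • m + m := succ_nsmul m k
    _ ≤ k • m + (ℓ - k • m) := by gcongr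
    _ = ℓ := add_tsub_cancel_of_le hle

theorem le_sum_nsmul [Fintype ι] (hm : ∀ i, 1 ≤ m i) (v : ι → ℕ) : v ≤ (∑ i, v i) • m :=
  fun i => (Finset.single_le_sum_of_canonicallyOrdered (Finset.mem_univ i)).trans
    (Nat.le_mul_of_pos_right _ (hm i))

theorem sum_add_le_of_le_nsmul [Fintype ι] {T : ℕ} (hvT : v ≤ T • m) (hmv : ¬ m ≤ v) :
    ∑ i, v i + T ≤ T * ∑ i, m i := by
  classical
  obtain ⟨j, hj⟩ : ∃ j, v j < m j := by simpa [Pi.le_def] using hmv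
  have hvj : v j + T ≤ T * m j := by
    rcases T.eq_zero_or_pos with rfl | hT
    · simpa using hvT j
    · nlinarith
  rw [Finset.mul_sum, ← Finset.add_sum_erase _ _ (Finset.mem_univ j),
    ← Finset.add_sum_erase _ (fun i => T * m i) (Finset.mem_univ j), add_right_comm]
  exact add_le_add hvj (Finset.sum_le_sum fun i _ => hvT i)

theorem add_nsmul_mem {M : Type*} [AddMonoid M] {S : Set M} {a d : M}
    (hd : ∀ s ∈ S, s + d ∈ S) (ha : a ∈ S) (t : ℕ) : a + t • d ∈ S := by
  induction t with
  | zero => simpa using ha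
  | succ t ih => simpa only [succ_nsmul, add_assoc] using hd _ ih

end Vectors

section HilbertFunction

variable {ι : Type*}

/-- The set `Δ̄_i(ℓ)` of elements of `S` lying above `ℓ` and agreeing with it in coordinate `i`.
Here `S` may be any set of vectors, not only a semigroup. -/
def valueFiber (S : Set (ι → ℕ)) (ℓ : ι → ℕ) (i : ι) : Set (ι → ℕ) :=
  {s | s ∈ S ∧ s i = ℓ i ∧ ∀ j, j ≠ i → ℓ j ≤ s j}

/-- `h` is the Hilbert function of `S`: it vanishes at `0` and its increment from `ℓ` in direction
`i` is the indicator of `Δ̄_i(ℓ) ≠ ∅`. -/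
structure IsHilbertFunction [DecidableEq ι] (S : Set (ι → ℕ)) (h : (ι → ℕ) → ℕ) : Prop where
  map_zero : h 0 = 0
  add_single_of_nonempty : ∀ ℓ i, (valueFiber S ℓ i).Nonempty → h (ℓ + Pi.single i 1) = h ℓ + 1
  add_single_of_not_nonempty : ∀ ℓ i, ¬ (valueFiber S ℓ i).Nonempty → h (ℓ + Pi.single i 1) = h ℓ

/-- The weight function `w₀(ℓ) = 2 h(ℓ) - |ℓ|` of `h`. -/
def weight [Fintype ι] (h : (ι → ℕ) → ℕ) (ℓ : ι → ℕ) : ℤ :=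
  2 * (h ℓ : ℤ) - ∑ i, (ℓ i : ℤ)

variable {S : Set (ι → ℕ)} {h : (ι → ℕ) → ℕ} {a b d m s v ℓ : ι → ℕ} {i : ι}

theorem le_of_mem_valueFiber (hs : s ∈ valueFiber S ℓ i) : ℓ ≤ s := fun j => by
  by_cases hj : j = i
  · exact hj ▸ hs.2.1.ge
  · exact hs.2.2 j hj

theorem add_mem_valueFiber (hd : ∀ s ∈ S, s + d ∈ S) (hs : s ∈ valueFiber S ℓ i) :
    s + d ∈ valueFiber S (ℓ + d) i :=
  ⟨hd s hs.1, congrArg (· + d i) hs.2.1, fun j hj => Nat.add_le_add_right (hs.2.2 j hj) (d j)⟩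

theorem weight_add [Fintype ι] (h : (ι → ℕ) → ℕ) (a b : ι → ℕ) :
    weight h (a + b) = weight h a + (2 * ((h (a + b) : ℤ) - h a) - ∑ i, (b i : ℤ)) := by
  simp only [weight, Pi.add_apply, Nat.cast_add, Finset.sum_add_distrib]
  ring

namespace IsHilbertFunction

variable [DecidableEq ι]

section Growth

variable [Finite ι]

theorem monotone (hh : IsHilbertFunction S h) : Monotone h :=
  monotone_of_le_add_single fun ℓ i => by
    by_cases hne : (valueFiber S ℓ i).Nonempty
    · exact hh.add_single_of_nonempty ℓ i hne ▸ Nat.le_succ _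
    · exact (hh.add_single_of_not_nonempty ℓ i hne).ge

theorem lt_of_valueFiber_nonempty (hh : IsHilbertFunction S h) (hab : a ≤ b) (hi : a i < b i)
    (hne : (valueFiber S a i).Nonempty) : h a < h b := by
  obtain ⟨c, rfl⟩ := exists_add_of_le hab
  have hci : 1 ≤ c i := Nat.pos_of_lt_add_right hi
  have hc : Pi.single i 1 ≤ c := single_le_iff.mpr hci
  calc h a < h (a + Pi.single i 1) := by simp [hh.add_single_of_nonempty a i hne]
    _ ≤ h (a + c) := hh.monotone (by gcongr)

theorem monotone_add_sub (hh : IsHilbertFunction S h) (hd : ∀ s ∈ S, s + d ∈ S) :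
    Monotone fun ℓ => (h (ℓ + d) : ℤ) - h ℓ :=
  monotone_of_le_add_single fun ℓ i => by
    rw [add_right_comm ℓ]
    by_cases hne : (valueFiber S ℓ i).Nonempty
    · have hne' : (valueFiber S (ℓ + d) i).Nonempty :=
        hne.elim fun _ hs => ⟨_, add_mem_valueFiber hd hs⟩
      simp [hh.add_single_of_nonempty _ _ hne, hh.add_single_of_nonempty _ _ hne']
    · rw [hh.add_single_of_not_nonempty _ _ hne]
      gcongr
      exact hh.monotone le_self_add

theorem le_one_of_le (hh : IsHilbertFunction S h) (hmin : ∀ s ∈ S, s ≠ 0 → m ≤ s) (hvm : v ≤ m) :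
    h v ≤ 1 := by
  induction v using induction_add_single with
  | zero => simp [hh.map_zero]
  | add_single v i ih =>
    by_cases hne : (valueFiber S v i).Nonempty
    · obtain ⟨s, hs⟩ := hne
      have hvi : v i < m i := by simpa using hvm i
      have hs0 : s = 0 := by
        by_contra hs0
        exact (hmin s hs.1 hs0 i).not_gt (hs.2.1 ▸ hvi)
      have hv0 : v = 0 := le_bot_iff.mp ((le_of_mem_valueFiber hs).trans_eq hs0)
      rw [hh.add_single_of_nonempty v i ⟨s, hs⟩, hv0, hh.map_zero]
    · rw [hh.add_single_of_not_nonempty v i hne]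
      exact ih (le_self_add.trans hvm)

theorem lt_add (hh : IsHilbertFunction S h) (ha : a ∈ S) (hv : v ≠ 0) : h a < h (a + v) := by
  obtain ⟨i, hi⟩ := Function.ne_iff.mp hv
  exact hh.lt_of_valueFiber_nonempty (i := i) le_self_add
    (Nat.lt_add_of_pos_right (Nat.pos_of_ne_zero hi)) ⟨a, ha, rfl, fun _ _ => le_rfl⟩

theorem apply_add_single_lt (hh : IsHilbertFunction S h) (hd : ∀ s ∈ S, s + d ∈ S) (ha : a ∈ S)
    {t : ℕ} (ht : t * d i < v i) : h (a + Pi.single i (t * d i)) < h (a + v) := by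
  have hle : Pi.single i (t * d i) ≤ v := single_le_iff.mpr ht.le
  exact hh.lt_of_valueFiber_nonempty (i := i) (by gcongr) (by simpa using ht)
    ⟨a + t • d, add_nsmul_mem hd ha t, by simp, fun j hj => by simp [hj]⟩

theorem add_le_apply_add_single (hh : IsHilbertFunction S h) (hd : ∀ s ∈ S, s + d ∈ S)
    (ha : a ∈ S) (hdi : 0 < d i) (t : ℕ) : h a + t ≤ h (a + Pi.single i (t * d i)) := by
  induction t with
  | zero => simp
  | succ t ih =>
    have hlt : t * d i < (Pi.single i ((t + 1) * d i) : ι → ℕ) i := by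
      simpa using Nat.mul_lt_mul_of_pos_right t.lt_succ_self hdi
    exact ih.trans_lt (hh.apply_add_single_lt hd ha hlt)

theorem add_le_of_forall_not_le_nsmul (hh : IsHilbertFunction S h) (hm : ∀ i, 1 ≤ m i)
    (hSm : ∀ s ∈ S, s + m ∈ S) (ha : a ∈ S) {T : ℕ} (hT : ∀ t < T, ¬ v ≤ t • m) :
    h a + T ≤ h (a + v) := by
  cases T with
  | zero => exact hh.monotone le_self_add
  | succ t =>
    obtain ⟨i, hi⟩ : ∃ i, t * m i < v i := by simpa [Pi.le_def] using hT t t.lt_succ_self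
    exact (hh.add_le_apply_add_single hSm ha (hm i) t).trans_lt (hh.apply_add_single_lt hSm ha hi)

end Growth

variable [Fintype ι]

theorem weight_zero (hh : IsHilbertFunction S h) : weight h 0 = 0 := by
  simp [weight, hh.map_zero]

theorem weight_le_weight_add (hh : IsHilbertFunction S h) (hm : ∀ i, 1 ≤ m i)
    (hSm : ∀ s ∈ S, s + m ∈ S) (hm3 : ∑ i, m i ≤ 3) (ha : a ∈ S) (hmv : ¬ m ≤ v) :
    weight h a ≤ weight h (a + v) := by
  classical
  have hex : ∃ T : ℕ, v ≤ T • m := ⟨_, le_sum_nsmul hm v⟩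
  obtain ⟨T, hvT, hT⟩ : ∃ T : ℕ, v ≤ T • m ∧ ∀ t < T, ¬ v ≤ t • m :=
    ⟨Nat.find hex, Nat.find_spec hex, fun _ => Nat.find_min hex⟩
  have hgrowth : h a + T ≤ h (a + v) := hh.add_le_of_forall_not_le_nsmul hm hSm ha hT
  have hsize : ∑ i, v i ≤ 2 * T := by
    have := sum_add_le_of_le_nsmul hvT hmv
    have := Nat.mul_le_mul_left T hm3
    omega
  rw [weight_add, ← Nat.cast_sum]
  omega

theorem sum_le_three (hh : IsHilbertFunction S h) (hmin : ∀ s ∈ S, s ≠ 0 → m ≤ s)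
    (hw : -1 ≤ weight h m) : ∑ i, m i ≤ 3 := by
  have hm1 : h m ≤ 1 := hh.le_one_of_le hmin le_rfl
  rw [weight, ← Nat.cast_sum] at hw
  omega

theorem weight_le_weight_add_of_le (hh : IsHilbertFunction S h) (hm0 : m ≠ 0)
    (hSm : ∀ s ∈ S, s + m ∈ S) (hmin : ∀ s ∈ S, s ≠ 0 → m ≤ s)
    (hw : -1 ≤ weight h (m + m)) (ha : a ∈ S) (hma : m ≤ a) :
    weight h a ≤ weight h (a + m) := by
  have hm1 : h m ≤ 1 := hh.le_one_of_le hmin le_rfl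
  have hstrict : h a < h (a + m) := hh.lt_add ha hm0
  have hconvex : (h (m + m) : ℤ) - h m ≤ h (a + m) - h a := hh.monotone_add_sub hSm hma
  simp only [weight, Pi.add_apply, Nat.cast_add, Finset.sum_add_distrib] at hw
  rw [weight_add]
  omega

theorem neg_one_le_weight_nsmul (hh : IsHilbertFunction S h) (hm0 : m ≠ 0) (h0S : 0 ∈ S)
    (hSm : ∀ s ∈ S, s + m ∈ S) (hmin : ∀ s ∈ S, s ≠ 0 → m ≤ s)
    (hw1 : -1 ≤ weight h m) (hw2 : -1 ≤ weight h (m + m)) (k : ℕ) :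
    -1 ≤ weight h (k • m) := by
  rcases k.eq_zero_or_pos with rfl | hk
  · simp [hh.weight_zero]
  induction k, hk using Nat.le_induction with
  | base => simpa using hw1
  | succ k hk ih =>
    have hkS : k • m ∈ S := by simpa using add_nsmul_mem hSm h0S k
    have hmk : m ≤ k • m := fun i => Nat.le_mul_of_pos_left (m i) hk
    exact succ_nsmul m k ▸ ih.trans (hh.weight_le_weight_add_of_le hm0 hSm hmin hw2 hkS hmk)

end IsHilbertFunction

end HilbertFunction

theorem weight_ge_neg_one_iff_general {ι : Type*} [Fintype ι] [DecidableEq ι] [Nonempty ι]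
    {S : Set (ι → ℕ)} {h : (ι → ℕ) → ℕ} {m : ι → ℕ}
    (hh : IsHilbertFunction S h) (hm : ∀ i, 1 ≤ m i) (h0S : 0 ∈ S)
    (hSm : ∀ s ∈ S, s + m ∈ S) (hmin : ∀ s ∈ S, s ≠ 0 → m ≤ s) :
    (-1 ≤ weight h m ∧ -1 ≤ weight h (m + m)) ↔ ∀ ℓ, -1 ≤ weight h ℓ := by
  refine ⟨fun ⟨hw1, hw2⟩ ℓ => ?_, fun hw => ⟨hw _, hw _⟩⟩
  have hm0 : m ≠ 0 := Function.ne_iff.mpr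
    ⟨Classical.arbitrary ι, Nat.one_le_iff_ne_zero.mp (hm _)⟩
  obtain ⟨k, v, rfl, hmv⟩ := exists_eq_nsmul_add_not_le hm0 ℓ
  have hkS : k • m ∈ S := by simpa using add_nsmul_mem hSm h0S k
  calc -1 ≤ weight h (k • m) := hh.neg_one_le_weight_nsmul hm0 h0S hSm hmin hw1 hw2 k
    _ ≤ weight h (k • m + v) :=
      hh.weight_le_weight_add hm hSm (hh.sum_le_three hmin hw1) hkS hmv

/-- In the standing combinatorial setup (value semigroup `S ⊆ ℕ^r`,
Hilbert function `h`, weight function `w₀(ℓ) = 2h(ℓ) - |ℓ|`, multiplicity vector `m`),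
one has `w₀(m) ≥ -1 ∧ w₀(2m) ≥ -1` iff `w₀(ℓ) ≥ -1` for every `ℓ ∈ ℕ^r`. -/
theorem weight_ge_neg_one_iff
    (r : ℕ) (hr : 1 ≤ r)
    (S : AddSubmonoid (Fin r → ℕ))
    (h : (Fin r → ℕ) → ℕ)
    (h0 : h 0 = 0)
    (hstep_pos : ∀ (ℓ : Fin r → ℕ) (i : Fin r),
      (∃ s ∈ S, s i = ℓ i ∧ ∀ j, j ≠ i → ℓ j ≤ s j) →
        h (ℓ + Pi.single i 1) = h ℓ + 1)
    (hstep_neg : ∀ (ℓ : Fin r → ℕ) (i : Fin r),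
      ¬ (∃ s ∈ S, s i = ℓ i ∧ ∀ j, j ≠ i → ℓ j ≤ s j) →
        h (ℓ + Pi.single i 1) = h ℓ)
    (w0 : (Fin r → ℕ) → ℤ)
    (hw0 : ∀ ℓ, w0 ℓ = 2 * (h ℓ : ℤ) - ∑ i, (ℓ i : ℤ))
    (m : Fin r → ℕ) (hm : ∀ i, 1 ≤ m i) (hmS : m ∈ S)
    (hSm : ∀ s ∈ S, s ≠ 0 → m ≤ s) :
    ((-1 : ℤ) ≤ w0 m ∧ (-1 : ℤ) ≤ w0 (m + m)) ↔ (∀ ℓ, (-1 : ℤ) ≤ w0 ℓ) := by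
  have := Fin.pos_iff_nonempty.mp hr
  obtain rfl : w0 = weight h := funext hw0
  exact weight_ge_neg_one_iff_general (ι := Fin r) (S := S) ⟨h0, hstep_pos, hstep_neg⟩ hm
    S.zero_mem (fun s hs => S.add_mem hs hmS) hSm
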